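/- arXiv:1810.05492 — 2 statements merged into one kernel-verified Lean document; each statement's English description precedes it below -/
import Mathlib

section
/- Let m₀ ∈ (0,1], let T(m₀) be the unique solution in [1/2,2] of |m₀| = (2T−1)²(T+4)/(27T), fix T > T(m₀), and let m ∈ (0,m₀]. Let M₁ < M₂ < 0 < M₃ be the three real solutions of T²M³ + T(2−T)M|M| + (1−2T)M = m, and let M₊ be the unique positive solution of T²M² + T(2−T)M + 1 − 2T = 0. Define φ(M) = M²(T − 1/2 − T|M|). Then φ(M₃) < φ(M₊) < φ(M₁) < φ(M₂) and φ(M₂) > 0 > φ(M₊). -/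
/-!
The consistency function at `M` equals `M * q(|M|)` for a quadratic `q` whose only positive root
is `M₊`, and the cost `φ` depends on `|M|` alone. For `m > 0` the sign of `M` therefore decides the
sign of `q(|M|)`, which gives `|M₁|, |M₂| < M₊ < M₃`. As `T M₊ > T - 1/2`, the cost is negative at
`M₊` and beyond, and a negative cost lies below the cost at every point of smaller modulus; this
gives `φ(M₃) < φ(M₊) < φ(M₁)`. Both `M₁` and `M₂` solve the equation, so the secant of `x * q(x)`
through `|M₁|` and `|M₂|` is horizontal, which forces `3T(|M₁| + |M₂|) < 4(T - 1/2)`. Since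
`|M₂| < |M₁|`, this makes `φ(M₂)` positive, and under the secant relation it is equivalent to
`φ(M₁) < φ(M₂)`.
-/

theorem abs_lt_abs_of_lt_of_nonpos {α : Type*} [AddCommGroup α] [LinearOrder α]
    [IsOrderedAddMonoid α] {a b : α} (hab : a < b) (hb : b ≤ 0) : |b| < |a| := by
  rw [abs_of_nonpos hb, abs_of_nonpos (hab.le.trans hb)]
  exact neg_lt_neg hab

section

variable {T m p x y M N M₁ M₂ M₃ : ℝ}

/-- The function of the terminal mean `M` whose value is prescribed to be `m` by the consistency
equation with horizon `T`. -/
noncomputable def consistencyFun (T M : ℝ) : ℝ :=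
  T ^ 2 * M ^ 3 + T * (2 - T) * M * |M| + (1 - 2 * T) * M

/-- The cofactor of `M` in `consistencyFun T M`, as a function of the modulus `x = |M|`. Its
positive root is the terminal mean `M₊` of the case `m = 0`. -/
noncomputable def consistencyFactor (T x : ℝ) : ℝ :=
  T ^ 2 * x ^ 2 + T * (2 - T) * x + 1 - 2 * T

/-- The total cost `φ(M)` of the mean field game solution with horizon `T` and terminal
mean `M`. -/
noncomputable def totalCost (T M : ℝ) : ℝ :=
  M ^ 2 * (T - 1 / 2 - T * |M|)

theorem consistencyFun_eq_mul (T M : ℝ) :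
    consistencyFun T M = M * consistencyFactor T |M| := by
  rw [consistencyFun, consistencyFactor, sq_abs]
  ring

theorem consistencyFun_of_nonpos (hM : M ≤ 0) :
    consistencyFun T M = -(|M| * consistencyFactor T |M|) := by
  rw [consistencyFun_eq_mul, ← neg_mul, abs_of_nonpos hM, neg_neg]

theorem mul_consistencyFactor_of_root (hp : consistencyFactor T p = 0) (x : ℝ) :
    p * consistencyFactor T x = (x - p) * (T ^ 2 * p * x + (2 * T - 1)) := by
  unfold consistencyFactor at *
  linear_combination x * hp

theorem consistencyFactor_pos_iff (hT : 1 / 2 < T) (hp₀ : 0 < p)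
    (hp : consistencyFactor T p = 0) (hx : 0 ≤ x) : 0 < consistencyFactor T x ↔ p < x := by
  have slope_pos : 0 < T ^ 2 * p * x + (2 * T - 1) :=
    add_pos_of_nonneg_of_pos (by positivity) (by linarith)
  rw [← mul_pos_iff_of_pos_left hp₀, mul_consistencyFactor_of_root hp,
    mul_pos_iff_of_pos_right slope_pos, sub_pos]

theorem consistencyFactor_neg_iff (hT : 1 / 2 < T) (hp₀ : 0 < p)
    (hp : consistencyFactor T p = 0) (hx : 0 ≤ x) : consistencyFactor T x < 0 ↔ x < p := by
  have slope_pos : 0 < T ^ 2 * p * x + (2 * T - 1) :=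
    add_pos_of_nonneg_of_pos (by positivity) (by linarith)
  rw [← neg_pos, ← mul_pos_iff_of_pos_left hp₀, mul_neg, mul_consistencyFactor_of_root hp,
    ← neg_mul, mul_pos_iff_of_pos_right slope_pos, neg_sub, sub_pos]

theorem lt_abs_of_pos_of_consistencyFun_pos (hT : 1 / 2 < T) (hp₀ : 0 < p)
    (hp : consistencyFactor T p = 0) (hM : 0 < M) (h : 0 < consistencyFun T M) : p < |M| := by
  rw [consistencyFun_eq_mul] at h
  exact (consistencyFactor_pos_iff hT hp₀ hp (abs_nonneg M)).mp (pos_of_mul_pos_right h hM.le)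

theorem abs_lt_of_neg_of_consistencyFun_pos (hT : 1 / 2 < T) (hp₀ : 0 < p)
    (hp : consistencyFactor T p = 0) (hM : M < 0) (h : 0 < consistencyFun T M) : |M| < p := by
  rw [consistencyFun_eq_mul] at h
  exact (consistencyFactor_neg_iff hT hp₀ hp (abs_nonneg M)).mp (neg_of_mul_pos_right h hM.le)

theorem sub_half_lt_mul_of_root (hT : 0 < T) (hp₀ : 0 < p) (hp : consistencyFactor T p = 0) :
    T - 1 / 2 < T * p := by
  have two_lt : 2 < T * p + 2 := lt_add_of_pos_left 2 (mul_pos hT hp₀)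
  have mul_eq_one : (T * p + 2) * (T - T * p) = 1 := by
    unfold consistencyFactor at hp
    linear_combination -hp
  have sub_lt_half : T - T * p < 1 / 2 :=
    lt_of_mul_lt_mul_left (by linarith) (two_pos.trans two_lt).le
  linarith

theorem secant_eq_zero_of_mul_consistencyFactor_eq (hxy : x ≠ y)
    (h : x * consistencyFactor T x = y * consistencyFactor T y) :
    T ^ 2 * (x ^ 2 + x * y + y ^ 2) + T * (2 - T) * (x + y) + 1 - 2 * T = 0 := by
  refine (mul_eq_zero_iff_left (sub_ne_zero.mpr hxy)).mp ?_
  unfold consistencyFactor at h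
  linear_combination h

theorem three_mul_add_lt_of_mul_consistencyFactor_eq (hT : 0 < T) (hx : 0 ≤ x) (hy : 0 ≤ y)
    (hxy : x ≠ y) (h : x * consistencyFactor T x = y * consistencyFactor T y) :
    3 * (T * (x + y)) < 4 * (T - 1 / 2) := by
  have secant := secant_eq_zero_of_mul_consistencyFactor_eq hxy h
  have sq_pos : 0 < (T * (x - y)) ^ 2 :=
    sq_pos_of_ne_zero (mul_ne_zero hT.ne' (sub_ne_zero.mpr hxy))
  have factor_pos : 0 < T * (x + y) + 2 := by positivity
  -- `x² + xy + y² = (3(x + y)² + (x - y)²) / 4` turns the secant relation into one in `x + y`.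
  have mul_neg : (3 * (T * (x + y)) - 4 * (T - 1 / 2)) * (T * (x + y) + 2) < 0 := by
    linarith
  exact sub_neg.mp (neg_of_mul_neg_left mul_neg factor_pos.le)

theorem totalCost_pos_iff (hM : M ≠ 0) : 0 < totalCost T M ↔ T * |M| < T - 1 / 2 := by
  rw [totalCost, mul_pos_iff_of_pos_left (sq_pos_of_ne_zero hM), sub_pos]

theorem totalCost_neg_iff (hM : M ≠ 0) : totalCost T M < 0 ↔ T - 1 / 2 < T * |M| := by
  rw [← neg_pos, totalCost, ← mul_neg, mul_pos_iff_of_pos_left (sq_pos_of_ne_zero hM), neg_sub,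
    sub_pos]

theorem totalCost_lt_totalCost_iff_of_abs_lt (h : |M| < |N|) :
    totalCost T N < totalCost T M ↔
      (T - 1 / 2) * (|M| + |N|) < T * (|M| ^ 2 + |M| * |N| + |N| ^ 2) := by
  have sub_eq : totalCost T M - totalCost T N = (|N| - |M|) *
      (T * (|M| ^ 2 + |M| * |N| + |N| ^ 2) - (T - 1 / 2) * (|M| + |N|)) := by
    rw [totalCost, totalCost, ← sq_abs M, ← sq_abs N]
    ring
  rw [← sub_pos, sub_eq, mul_pos_iff_of_pos_left (sub_pos.mpr h), sub_pos]

theorem totalCost_lt_of_abs_lt_of_neg (hT : 0 ≤ T) (h : |M| < |N|) (hN : totalCost T N < 0) :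
    totalCost T N < totalCost T M := by
  have N_abs_pos : 0 < |N| := (abs_nonneg M).trans_lt h
  rw [totalCost_neg_iff (abs_pos.mp N_abs_pos)] at hN
  rw [totalCost_lt_totalCost_iff_of_abs_lt h]
  calc (T - 1 / 2) * (|M| + |N|) < T * |N| * (|M| + |N|) := by gcongr
    _ ≤ T * |N| * (|M| + |N|) + T * |M| ^ 2 := le_add_of_nonneg_right (by positivity)
    _ = T * (|M| ^ 2 + |M| * |N| + |N| ^ 2) := by ring

theorem totalCost_root_neg (hT : 0 < T) (hp₀ : 0 < p) (hp : consistencyFactor T p = 0) :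
    totalCost T p < 0 := by
  rw [totalCost_neg_iff hp₀.ne', abs_of_pos hp₀]
  exact sub_half_lt_mul_of_root hT hp₀ hp

theorem mul_consistencyFactor_abs_eq (hM : M ≤ 0) (hN : N ≤ 0)
    (h : consistencyFun T M = consistencyFun T N) :
    |N| * consistencyFactor T |N| = |M| * consistencyFactor T |M| := by
  rw [consistencyFun_of_nonpos hM, consistencyFun_of_nonpos hN] at h
  exact (neg_inj.mp h).symm

theorem totalCost_lt_of_consistencyFun_eq (hT : 0 < T) (hMN : M < N) (hN : N ≤ 0)
    (h : consistencyFun T M = consistencyFun T N) : totalCost T M < totalCost T N := by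
  have abs_lt : |N| < |M| := abs_lt_abs_of_lt_of_nonpos hMN hN
  have h_abs := mul_consistencyFactor_abs_eq (hMN.le.trans hN) hN h
  have secant := secant_eq_zero_of_mul_consistencyFactor_eq abs_lt.ne h_abs
  have sum_lt := three_mul_add_lt_of_mul_consistencyFactor_eq hT (abs_nonneg N) (abs_nonneg M)
    abs_lt.ne h_abs
  rw [totalCost_lt_totalCost_iff_of_abs_lt abs_lt]
  refine lt_of_mul_lt_mul_left ?_ hT.le
  linarith

theorem totalCost_pos_of_consistencyFun_eq (hT : 0 < T) (hMN : M < N) (hN : N < 0)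
    (h : consistencyFun T M = consistencyFun T N) : 0 < totalCost T N := by
  have abs_lt : |N| < |M| := abs_lt_abs_of_lt_of_nonpos hMN hN.le
  have sum_lt := three_mul_add_lt_of_mul_consistencyFactor_eq hT (abs_nonneg N) (abs_nonneg M)
    abs_lt.ne (mul_consistencyFactor_abs_eq (hMN.trans hN).le hN.le h)
  have mul_abs_pos : 0 < T * |N| := mul_pos hT (abs_pos_of_neg hN)
  have mul_abs_lt : T * |N| < T * |M| := by gcongr
  rw [totalCost_pos_iff hN.ne]
  linarith

theorem stmt_18_general (hT : 1 / 2 < T) (hm : 0 < m) (h₁₂ : M₁ < M₂) (h₂ : M₂ < 0) (h₃ : 0 < M₃)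
    (hM₁ : consistencyFun T M₁ = m) (hM₂ : consistencyFun T M₂ = m)
    (hM₃ : consistencyFun T M₃ = m) (hp₀ : 0 < p) (hp : consistencyFactor T p = 0) :
    totalCost T M₃ < totalCost T p ∧ totalCost T p < totalCost T M₁ ∧
      totalCost T M₁ < totalCost T M₂ ∧ 0 < totalCost T M₂ ∧ totalCost T p < 0 := by
  have hT₀ : 0 < T := one_half_pos.trans hT
  have cost_p_neg : totalCost T p < 0 := totalCost_root_neg hT₀ hp₀ hp
  have abs_M₁_lt : |M₁| < |p| := by
    rw [abs_of_pos hp₀]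
    exact abs_lt_of_neg_of_consistencyFun_pos hT hp₀ hp (h₁₂.trans h₂) (hM₁ ▸ hm)
  have lt_abs_M₃ : |p| < |M₃| := by
    rw [abs_of_pos hp₀]
    exact lt_abs_of_pos_of_consistencyFun_pos hT hp₀ hp h₃ (hM₃ ▸ hm)
  have cost_M₃_neg : totalCost T M₃ < 0 := by
    rw [totalCost_neg_iff hp₀.ne'] at cost_p_neg
    rw [totalCost_neg_iff h₃.ne']
    exact cost_p_neg.trans (by gcongr)
  have hM₁₂ : consistencyFun T M₁ = consistencyFun T M₂ := hM₁.trans hM₂.symm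
  exact ⟨totalCost_lt_of_abs_lt_of_neg hT₀.le lt_abs_M₃ cost_M₃_neg,
    totalCost_lt_of_abs_lt_of_neg hT₀.le abs_M₁_lt cost_p_neg,
    totalCost_lt_of_consistencyFun_eq hT₀ h₁₂ h₂.le hM₁₂,
    totalCost_pos_of_consistencyFun_eq hT₀ h₁₂ h₂ hM₁₂, cost_p_neg⟩

end

/-- Let `m₀ ∈ (0,1]`, `Tm = T(m₀)` the solution in `[1/2,2]` of
`|m₀| = (2T−1)²(T+4)/(27T)`, `T > Tm`, and `m ∈ (0,m₀]`. Let
`M₁ < M₂ < 0 < M₃` be the three real solutions of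
`T²M³ + T(2−T)M|M| + (1−2T)M = m`, and `M₊` the unique positive solution of
`T²M² + T(2−T)M + 1 − 2T = 0`. Then, with `φ(M) = M²(T − 1/2 − T|M|)`,
`φ(M₃) < φ(M₊) < φ(M₁) < φ(M₂)` and `φ(M₂) > 0 > φ(M₊)`. -/
theorem stmt_18 (m₀ Tm T m M1 M2 M3 Mp : ℝ) (hm₀ : m₀ ∈ Set.Ioc (0:ℝ) 1)
    (hTm : Tm ∈ Set.Icc (1/2 : ℝ) 2 ∧ |m₀| = (2*Tm - 1)^2 * (Tm + 4) / (27*Tm))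
    (hT : Tm < T) (hm : m ∈ Set.Ioc (0:ℝ) m₀)
    (hord : M1 < M2 ∧ M2 < 0 ∧ 0 < M3)
    (hM1 : T^2 * M1^3 + T*(2 - T) * M1 * |M1| + (1 - 2*T) * M1 = m)
    (hM2 : T^2 * M2^3 + T*(2 - T) * M2 * |M2| + (1 - 2*T) * M2 = m)
    (hM3 : T^2 * M3^3 + T*(2 - T) * M3 * |M3| + (1 - 2*T) * M3 = m)
    (hall : ∀ M : ℝ, T^2 * M^3 + T*(2 - T) * M * |M| + (1 - 2*T) * M = m →
      M = M1 ∨ M = M2 ∨ M = M3)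
    (hMp : 0 < Mp ∧ T^2 * Mp^2 + T*(2 - T) * Mp + 1 - 2*T = 0)
    (hMpuniq : ∀ M' : ℝ, 0 < M' →
      T^2 * M'^2 + T*(2 - T) * M' + 1 - 2*T = 0 → M' = Mp) :
    let φ : ℝ → ℝ := fun M => M^2 * (T - 1/2 - T * |M|)
    φ M3 < φ Mp ∧ φ Mp < φ M1 ∧ φ M1 < φ M2 ∧ 0 < φ M2 ∧ φ Mp < 0 := by
  exact stmt_18_general (hTm.1.1.trans_lt hT) hm.1 hord.1 hord.2.1 hord.2.2 hM1 hM2 hM3 hMp.1 hMp.2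
end

section
/- Let T > 0, m₀ ∈ ℝ, and let M ≠ 0 satisfy T²M³ + T(2−T)M|M| + (1−2T)M = m₀. Define z(t) = 2M/(|M|(T−t)+1) and m(t) = (m₀ − sgn(M)) · ((|M|(T−t)+1)/(|M|T+1))² + sgn(M) for t ∈ [0,T]. Then ∫₀ᵀ [ ((1+m(t))/4)·((z(t))⁻)² + ((1−m(t))/4)·((z(t))⁺)² ] dt − M²/2 = M²(T − 1/2 − T|M|). -/
/-!
Put `w t = |M| * (T - t) + 1`. The costate `z` is proportional to `1 / w`, and the fixed-point
equation for `M` says exactly that the state is `m = sgn M * (1 - (1 - |M|) * w ^ 2)`. Only the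
population in state `-sgn M` moves; its mass is a constant multiple of `w ^ 2` and its squared
control a constant multiple of `1 / w ^ 2`, so the running cost is the constant `M ^ 2 * (1 - |M|)`.
-/

/-- The Lagrangian `m₁ α₁² / 2 + m₋₁ α₋₁² / 2` of the two-state control problem, with masses
`m₁ = (1 + m) / 2`, `m₋₁ = (1 - m) / 2` and equilibrium controls `α₁ = z⁻`, `α₋₁ = z⁺`. -/
noncomputable def runningCost (m z : ℝ) : ℝ :=
  (1 + m) / 4 * (max (-z) 0) ^ 2 + (1 - m) / 4 * (max z 0) ^ 2

theorem runningCost_mul_of_nonneg (m z : ℝ) {r : ℝ} (hr : 0 ≤ r) :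
    runningCost m (r * z) = r ^ 2 * runningCost m z := by
  have max_mul_zero (y : ℝ) : max (r * y) 0 = r * max y 0 := by
    rw [mul_max_of_nonneg _ _ hr, mul_zero]
  unfold runningCost
  rw [← mul_neg, max_mul_zero, max_mul_zero]
  ring

theorem runningCost_sign_mul (p z : ℝ) :
    runningCost (Real.sign z * p) z = (1 - p) / 4 * z ^ 2 := by
  unfold runningCost
  rcases lt_trichotomy z 0 with hz | rfl | hz
  · rw [max_eq_left (neg_nonneg.2 hz.le), max_eq_right hz.le, Real.sign_of_neg hz]
    ring
  · simp
  · rw [max_eq_right (neg_nonpos.2 hz.le), max_eq_left hz.le, Real.sign_of_pos hz]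
    ring

theorem realSign_mul_abs (x : ℝ) : Real.sign x * |x| = x := by
  rcases lt_trichotomy x 0 with hx | rfl | hx
  · rw [Real.sign_of_neg hx, abs_of_neg hx, neg_one_mul, neg_neg]
  · rw [abs_zero, mul_zero]
  · rw [Real.sign_of_pos hx, abs_of_pos hx, one_mul]

theorem fixedPoint_sub_sign (T M : ℝ) :
    T ^ 2 * M ^ 3 + T * (2 - T) * M * |M| + (1 - 2 * T) * M - Real.sign M =
      -(Real.sign M * (1 - |M|) * (|M| * T + 1) ^ 2) := by
  have cube_eq : M ^ 3 = M * |M| ^ 2 := by rw [sq_abs]; ring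
  rw [cube_eq]
  linear_combination
    -(T ^ 2 * |M| ^ 2 + T * (2 - T) * |M| + (1 - 2 * T)) * realSign_mul_abs M

theorem state_eq_sign_mul {T m₀ M : ℝ} (w : ℝ) (hv : |M| * T + 1 ≠ 0)
    (hm₀ : T ^ 2 * M ^ 3 + T * (2 - T) * M * |M| + (1 - 2 * T) * M = m₀) :
    (m₀ - Real.sign M) * (w / (|M| * T + 1)) ^ 2 + Real.sign M =
      Real.sign M * (1 - (1 - |M|) * w ^ 2) := by
  rw [← hm₀, fixedPoint_sub_sign]
  field_simp
  ring

theorem runningCost_state_costate (M c : ℝ) {w : ℝ} (hw : 0 < w) :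
    runningCost (Real.sign M * (1 - c * w ^ 2)) (2 * M / w) = M ^ 2 * c := by
  rw [mul_div_right_comm, runningCost_mul_of_nonneg _ _ (by positivity), runningCost_sign_mul]
  field_simp
  ring

/-- Let `T > 0`, `m₀ ∈ ℝ`, and `M ≠ 0` with
`T²M³ + T(2−T)M|M| + (1−2T)M = m₀`. For `z(t) = 2M/(|M|(T−t)+1)` and
`m(t) = (m₀ − sgn M)·((|M|(T−t)+1)/(|M|T+1))² + sgn M`, one has
`∫₀ᵀ [((1+m)/4)(z⁻)² + ((1−m)/4)(z⁺)²] dt − M²/2 = M²(T − 1/2 − T|M|)`,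
where `p⁻ = max (−p) 0` and `p⁺ = max p 0`. -/
theorem stmt_19 (T m₀ M : ℝ) (hT : 0 < T) (hM : M ≠ 0)
    (hcons : T^2 * M^3 + T*(2 - T) * M * |M| + (1 - 2*T) * M = m₀) :
    let z : ℝ → ℝ := fun t => 2*M / (|M| * (T - t) + 1)
    let m : ℝ → ℝ := fun t =>
      (m₀ - Real.sign M) * ((|M| * (T - t) + 1) / (|M| * T + 1))^2 + Real.sign M
    (∫ t in (0:ℝ)..T,
        ((1 + m t)/4 * (max (-(z t)) 0)^2 + (1 - m t)/4 * (max (z t) 0)^2))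
      - M^2/2 = M^2 * (T - 1/2 - T * |M|) := by
  intro z m
  have runningCost_const : ∀ t ∈ Set.uIcc 0 T, runningCost (m t) (z t) = M ^ 2 * (1 - |M|) := by
    intro t ht
    rw [Set.uIcc_of_le hT.le] at ht
    have hw : 0 < |M| * (T - t) + 1 := by
      have := sub_nonneg.2 ht.2
      positivity
    have hm : m t = Real.sign M * (1 - (1 - |M|) * (|M| * (T - t) + 1) ^ 2) :=
      state_eq_sign_mul _ (by positivity) hcons
    rw [hm, runningCost_state_costate _ _ hw]
  calc
    _ = (∫ t in (0 : ℝ)..T, runningCost (m t) (z t)) - M ^ 2 / 2 := rfl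
    _ = T * (M ^ 2 * (1 - |M|)) - M ^ 2 / 2 := by
      rw [intervalIntegral.integral_congr runningCost_const, intervalIntegral.integral_const,
        sub_zero, smul_eq_mul]
    _ = M ^ 2 * (T - 1 / 2 - T * |M|) := by ring
end
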